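/- Let G be a Gδ subset of 2^ω with λ(G) = 0. Then there is a martingale f such that G = D(f) and, for every β ∈ 2^ω, osc(f,β) ∈ {0} ∪ [1/2, 1]. -/

import Mathlib

/-!
Let `U` be a clopen set of tiny measure, and let `d s` be its density in `N_s`. The average of the
processes `2 ^ j * d`, `j < J`, each stopped when it reaches `1`, still starts from a tiny value
and is at least `1` once inside `U`; but it never falls by more than `2 / J`, because the processes
that are not yet stopped total at most `1 + 1/2 + 1/4 + ⋯`. Cover the null set `G` by clopen
sets `U k` and add up these averages, with `J = 2 ^ k` for `U k`. Each summand is eventually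
constant along every branch and the possible falls are summable, so the sum cannot oscillate.
Capping it at `1` gives a martingale that starts as low as desired, converges along every
branch, and is eventually `1` along every branch in `G`.

Write `G = ⋂ n, O n` with `O n` open. Rescaled copies of that martingale carry `f` from `1/4` up
to `3/4`, then back down to `1/4`, and so on, the `n`-th climb being declared complete only inside
`O n`. Along a branch in `G` every climb is completed and `f` oscillates by at least `1/2`. Along
any other branch only finitely many are, and `f` follows the last climb, which converges.
-/

open MeasureTheory Filter Topology
open scoped ENNReal

/-- The basic cylinder `N_s` determined by a finite binary sequence `s`:
the set of all `β ∈ 2^ω` extending `s`. -/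
def cyl (s : List Bool) : Set (ℕ → Bool) :=
  {β | ∀ i : Fin s.length, β i = s.get i}

/-- The initial segment `β↾l` of `β ∈ 2^ω`, as a finite binary sequence. -/
def seg (β : ℕ → Bool) (l : ℕ) : List Bool := List.ofFn (fun i : Fin l => β i)

/-- A martingale: a `[0,1]`-valued function on finite binary sequences with
`f(s) = (f(s⌢0) + f(s⌢1))/2`. -/
def IsMartingale (f : List Bool → ℝ) : Prop :=
  (∀ s, f s ∈ Set.Icc (0:ℝ) 1) ∧
  ∀ s, f s = (f (s ++ [false]) + f (s ++ [true])) / 2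

/-- The oscillation `osc(f,β) = inf_N sup_{p,q ≥ N} |f(β↾p) − f(β↾q)|`. -/
noncomputable def osc (f : List Bool → ℝ) (β : ℕ → Bool) : ℝ :=
  ⨅ N : ℕ, ⨆ p : {n : ℕ // N ≤ n}, ⨆ q : {n : ℕ // N ≤ n},
    |f (seg β p.1) - f (seg β q.1)|

/-- The set of divergence `D(f) = {β : osc(f,β) > 0}`. -/
def divSet (f : List Bool → ℝ) : Set (ℕ → Bool) := {β | 0 < osc f β}

/-- `M` has density 1 at `β`: `λ(M ∩ N_{β↾l}) / λ(N_{β↾l}) → 1`. -/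
def densityOne (μ : Measure (ℕ → Bool)) (M : Set (ℕ → Bool)) (β : ℕ → Bool) : Prop :=
  Tendsto (fun l : ℕ => μ (M ∩ cyl (seg β l)) / μ (cyl (seg β l))) atTop (𝓝 1)

/-- A set is `Σ⁰₃` iff it is a countable union of `Gδ` sets. -/
def IsSigma03 {X : Type*} [TopologicalSpace X] (S : Set X) : Prop :=
  ∃ g : ℕ → Set X, (∀ n, IsGδ (g n)) ∧ S = ⋃ n, g n

/-- A set is coanalytic (`Π¹₁`) iff its complement is analytic. -/
def IsCoanalytic {X : Type*} [TopologicalSpace X] (S : Set X) : Prop :=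
  MeasureTheory.AnalyticSet Sᶜ

/-- The associated (partial) function of a martingale: `ψ(f)(β) = lim_l f(β↾l)`
(a junk value if the limit does not exist). -/
noncomputable def psi (f : List Bool → ℝ) (β : ℕ → Bool) : ℝ :=
  limUnder atTop (fun l => f (seg β l))

theorem seg_succ (β : ℕ → Bool) (l : ℕ) : seg β (l + 1) = seg β l ++ [β l] := by
  rw [seg, List.ofFn_succ', List.concat_eq_append]
  rfl

theorem length_seg (β : ℕ → Bool) (l : ℕ) : (seg β l).length = l := List.length_ofFn

theorem seg_prefix_seg (β : ℕ → Bool) {k l : ℕ} (h : k ≤ l) : seg β k <+: seg β l := by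
  induction l, h using Nat.le_induction with
  | base => exact List.prefix_rfl
  | succ l _ ih => exact ih.trans (seg_succ β l ▸ List.prefix_append _ _)

theorem seg_length_eq_of_isPrefix {β : ℕ → Bool} {t : List Bool} {l : ℕ} (h : t <+: seg β l) :
    seg β t.length = t := by
  have hle : t.length ≤ l := length_seg β l ▸ h.length_le
  exact (List.prefix_of_prefix_length_le (seg_prefix_seg β hle) h (length_seg β _).le).eq_of_length
    (length_seg β _)

theorem mem_cyl_iff_seg_eq {s : List Bool} {β : ℕ → Bool} : β ∈ cyl s ↔ seg β s.length = s := by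
  simp [cyl, seg, List.ext_get_iff, Fin.forall_iff]

theorem mem_cyl_seg (β : ℕ → Bool) (l : ℕ) : β ∈ cyl (seg β l) := by
  rw [mem_cyl_iff_seg_eq, length_seg]

theorem mem_cyl_append_singleton {s : List Bool} {b : Bool} {β : ℕ → Bool} :
    β ∈ cyl (s ++ [b]) ↔ β ∈ cyl s ∧ β s.length = b := by
  simp [mem_cyl_iff_seg_eq, seg_succ]

theorem cyl_nil : cyl [] = Set.univ := by
  ext β
  simp [cyl]

theorem isClopen_cyl (s : List Bool) : IsClopen (cyl s) := by
  have h : cyl s = ⋂ i : Fin s.length, (fun β : ℕ → Bool => β i) ⁻¹' {s.get i} := by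
    ext β
    simp [cyl]
  rw [h]
  exact isClopen_iInter_of_finite fun i =>
    (isClopen_discrete {s.get i}).preimage (continuous_apply _)

theorem cyl_seg_eq_cylinder (β : ℕ → Bool) (l : ℕ) : cyl (seg β l) = PiNat.cylinder β l := by
  ext γ
  simp [cyl, seg, Fin.forall_iff, PiNat.cylinder]

theorem eventually_cyl_seg_subset {U : Set (ℕ → Bool)} (hU : IsOpen U) {β : ℕ → Bool}
    (hβ : β ∈ U) : ∀ᶠ l in atTop, cyl (seg β l) ⊆ U := by
  obtain ⟨_, ⟨γ, n, rfl⟩, hβn, hn⟩ :=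
    (PiNat.isTopologicalBasis_cylinders fun _ => Bool).exists_subset_of_mem_open hβ hU
  filter_upwards [eventually_ge_atTop n] with l hl
  rw [cyl_seg_eq_cylinder]
  exact (PiNat.cylinder_anti β hl).trans ((PiNat.mem_cylinder_iff_eq.1 hβn).trans_subset hn)

section osc

variable {f : List Bool → ℝ} {β : ℕ → Bool}

theorem osc_nonneg (f : List Bool → ℝ) (β : ℕ → Bool) : 0 ≤ osc f β :=
  Real.iInf_nonneg fun _ => Real.iSup_nonneg fun _ => Real.iSup_nonneg fun _ => abs_nonneg _

theorem osc_le {r : ℝ} (N : ℕ)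
    (h : ∀ p ≥ N, ∀ q ≥ N, |f (seg β p) - f (seg β q)| ≤ r) : osc f β ≤ r := by
  have : Nonempty {n : ℕ // N ≤ n} := ⟨⟨N, le_rfl⟩⟩
  have hbdd : BddBelow (Set.range fun N : ℕ => ⨆ p : {n : ℕ // N ≤ n}, ⨆ q : {n : ℕ // N ≤ n},
      |f (seg β p.1) - f (seg β q.1)|) :=
    ⟨0, Set.forall_mem_range.2 fun _ =>
      Real.iSup_nonneg fun _ => Real.iSup_nonneg fun _ => abs_nonneg _⟩
  exact (ciInf_le hbdd N).trans (ciSup_le fun p => ciSup_le fun q => h p.1 p.2 q.1 q.2)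

theorem le_osc {r C : ℝ} (hC : ∀ p q, |f (seg β p) - f (seg β q)| ≤ C)
    (h : ∀ N, ∃ p ≥ N, ∃ q ≥ N, r ≤ |f (seg β p) - f (seg β q)|) : r ≤ osc f β := by
  refine le_ciInf fun N => ?_
  obtain ⟨p, hp, q, hq, hr⟩ := h N
  have : Nonempty {n : ℕ // N ≤ n} := ⟨⟨N, le_rfl⟩⟩
  refine hr.trans ((le_ciSup (f := fun q : {n : ℕ // N ≤ n} => |f (seg β p) - f (seg β q.1)|)
    ⟨C, Set.forall_mem_range.2 fun q => hC p q⟩ ⟨q, hq⟩).trans ?_)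
  exact le_ciSup (f := fun p : {n : ℕ // N ≤ n} => ⨆ q : {n : ℕ // N ≤ n},
      |f (seg β p.1) - f (seg β q.1)|)
    ⟨C, Set.forall_mem_range.2 fun p => ciSup_le fun q => hC p q⟩ ⟨p, hp⟩

theorem osc_eq_zero_of_tendsto {x : ℝ} (h : Tendsto (fun l => f (seg β l)) atTop (𝓝 x)) :
    osc f β = 0 := by
  refine le_antisymm (le_of_forall_pos_le_add fun ε hε => ?_) (osc_nonneg f β)
  obtain ⟨N, hN⟩ := Metric.cauchySeq_iff.1 h.cauchySeq ε hε
  rw [zero_add]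
  exact osc_le N fun p hp q hq => (hN p hp q hq).le

theorem IsMartingale.abs_sub_le_one (hf : IsMartingale f) (s t : List Bool) :
    |f s - f t| ≤ 1 := by
  simpa using abs_sub_le_of_le_of_le (hf.1 s).1 (hf.1 s).2 (hf.1 t).1 (hf.1 t).2

end osc

section ClopenCover

variable {X : Type*} [TopologicalSpace X] [SecondCountableTopology X]

theorem exists_monotone_isClopen_iUnion_eq
    (hX : TopologicalSpace.IsTopologicalBasis {s : Set X | IsClopen s}) {U : Set X}
    (hU : IsOpen U) :
    ∃ C : ℕ → Set X, (∀ n, IsClopen (C n)) ∧ Monotone C ∧ ⋃ n, C n = U := by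
  obtain ⟨S, hS, rfl⟩ := hX.open_eq_sUnion hU
  obtain ⟨T, hT, hTS, hTU⟩ :=
    TopologicalSpace.isOpen_sUnion_countable S fun s hs => (hS hs).isOpen
  obtain ⟨D, hD⟩ := (hT.insert ∅).exists_eq_range (Set.insert_nonempty _ _)
  have hDclopen (n : ℕ) : IsClopen (D n) := by
    rcases hD.symm.subset (Set.mem_range_self n) with h | h
    · exact h ▸ isClopen_empty
    · exact hS (hTS h)
  refine ⟨Set.accumulate D, fun n => ?_, Set.monotone_accumulate, ?_⟩
  · exact (Set.finite_Iic n).isClopen_biUnion fun i _ => hDclopen i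
  · rw [Set.iUnion_accumulate, ← Set.sUnion_range, ← hD, Set.sUnion_insert, Set.empty_union, hTU]

variable [MeasurableSpace X] [OpensMeasurableSpace X] {μ : Measure X} [IsFiniteMeasure μ]
  [μ.OuterRegular] {G : Set X}

theorem exists_isClopen_cover_of_measure_zero
    (hX : TopologicalSpace.IsTopologicalBasis {s : Set X | IsClopen s}) (hG : μ G = 0)
    {ε : ℕ → ℝ≥0∞} (hε : ∀ k, 0 < ε k) :
    ∃ U : ℕ → Set X, (∀ k, IsClopen (U k)) ∧ (∀ k, μ (U k) ≤ ε k) ∧ G ⊆ ⋃ k, U k := by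
  -- Exhaust a small open `V ⊇ G` by clopen sets `C n`, and take the successive differences of a
  -- subsequence along which `μ (V \ C n)` decreases fast enough.
  obtain ⟨V, hGV, hVopen, hV⟩ := G.exists_isOpen_lt_of_lt (ε 0) (hG.trans_lt (hε 0))
  obtain ⟨C, hC, hCmono, hCV⟩ := exists_monotone_isClopen_iUnion_eq hX hVopen
  have hlim : Tendsto (fun n => μ (V \ C n)) atTop (𝓝 0) := by
    have hinter : ⋂ n, V \ C n = ∅ := by rw [← Set.sdiff_iUnion, hCV, Set.sdiff_self]
    rw [← measure_empty (μ := μ), ← hinter]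
    exact tendsto_measure_iInter_atTop
      (fun n => (hVopen.measurableSet.diff (hC n).isOpen.measurableSet).nullMeasurableSet)
      (fun _ _ hmn => Set.sdiff_subset_sdiff_right (hCmono hmn)) ⟨0, measure_ne_top _ _⟩
  obtain ⟨φ, hφ, hφε⟩ := extraction_forall_of_eventually fun k =>
    hlim.eventually_lt_const (hε (k + 1))
  have hCsub (n : ℕ) : C n ⊆ V := hCV ▸ Set.subset_iUnion C n
  refine ⟨disjointed (C ∘ φ), fun k => ?_, fun k => ?_, ?_⟩
  · exact disjointedRec (fun _ _ ht => ht.diff (hC _)) (hC _)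
  · cases k with
    | zero => exact (measure_mono ((disjointed_subset (C ∘ φ) 0).trans (hCsub _))).trans hV.le
    | succ k =>
      refine (measure_mono ?_).trans (hφε k).le
      change disjointed (C ∘ φ) (Order.succ k) ⊆ V \ C (φ k)
      rw [(hCmono.comp hφ.monotone).disjointed_succ (not_isMax k)]
      exact Set.sdiff_subset_sdiff_left (hCsub _)
  · rw [iUnion_disjointed]
    exact hGV.trans (hCV.symm.trans (hCmono.iSup_comp_tendsto_atTop hφ.tendsto_atTop).symm).subset

theorem exists_isClopen_cover_measureReal_le
    (hX : TopologicalSpace.IsTopologicalBasis {s : Set X | IsClopen s}) (hG : μ G = 0)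
    {ε : ℕ → ℝ} (hε : ∀ k, 0 < ε k) :
    ∃ U : ℕ → Set X, (∀ k, IsClopen (U k)) ∧ (∀ k, μ.real (U k) ≤ ε k) ∧ G ⊆ ⋃ k, U k := by
  obtain ⟨U, hU, hUε, hGU⟩ :=
    exists_isClopen_cover_of_measure_zero hX hG fun k => ENNReal.ofReal_pos.2 (hε k)
  exact ⟨U, hU, fun k => ENNReal.toReal_le_of_le_ofReal (hε k).le (hUε k), hGU⟩

end ClopenCover

/-- The averaging identity of a martingale, without the restriction to values in `[0,1]`, which
sums of capital processes need not satisfy. -/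
def IsAveraging (f : List Bool → ℝ) : Prop :=
  ∀ s, f s = (f (s ++ [false]) + f (s ++ [true])) / 2

namespace IsAveraging

variable {f : List Bool → ℝ}

theorem add_eq (hf : IsAveraging f) (s : List Bool) :
    f (s ++ [false]) + f (s ++ [true]) = 2 * f s := by
  rw [hf s]; ring

theorem const_mul (hf : IsAveraging f) (c : ℝ) : IsAveraging fun s => c * f s := fun s => by
  dsimp only; rw [hf s]; ring

theorem div_const (hf : IsAveraging f) (c : ℝ) : IsAveraging fun s => f s / c := fun s => by
  dsimp only; rw [hf s]; ring

theorem le_two_pow_mul (hf : IsAveraging f) (h0 : ∀ s, 0 ≤ f s) (s : List Bool) :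
    f s ≤ 2 ^ s.length * f [] := by
  induction s using List.reverseRecOn with
  | nil => simp
  | append_singleton s b ih =>
    have hle : f (s ++ [b]) ≤ 2 * f s := by
      have := hf.add_eq s
      cases b
      · linarith [h0 (s ++ [true])]
      · linarith [h0 (s ++ [false])]
    rw [List.length_append, List.length_singleton, pow_succ]
    linarith

variable {ι : Type*} {F : ι → List Bool → ℝ}

theorem finset_sum (hF : ∀ k, IsAveraging (F k)) (I : Finset ι) :
    IsAveraging fun s => ∑ k ∈ I, F k s := fun s => by
  rw [← Finset.sum_add_distrib, Finset.sum_div]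
  exact Finset.sum_congr rfl fun k _ => hF k s

theorem summable (hF : ∀ k, IsAveraging (F k)) (h0 : ∀ k s, 0 ≤ F k s)
    (hsum : Summable fun k => F k []) (s : List Bool) : Summable fun k => F k s :=
  (hsum.mul_left _).of_nonneg_of_le (fun k => h0 k s) fun k => (hF k).le_two_pow_mul (h0 k) s

theorem tsum (hF : ∀ k, IsAveraging (F k)) (hsum : ∀ s, Summable fun k => F k s) :
    IsAveraging fun s => ∑' k, F k s := fun s => by
  rw [← (hsum _).tsum_add (hsum _), ← tsum_div_const]
  exact tsum_congr fun k => hF k s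

end IsAveraging

/-- The density of `U` in the cylinder `N_s`, as a function of `s`; the factor `2 ^ s.length` is
`1 / λ(N_s)`. -/
noncomputable def cylDensity (μ : Measure (ℕ → Bool)) (U : Set (ℕ → Bool)) (s : List Bool) : ℝ :=
  2 ^ s.length * μ.real (U ∩ cyl s)

theorem cylDensity_nonneg (μ : Measure (ℕ → Bool)) (U : Set (ℕ → Bool)) (s : List Bool) :
    0 ≤ cylDensity μ U s := by
  unfold cylDensity; positivity

theorem cylDensity_nil (μ : Measure (ℕ → Bool)) (U : Set (ℕ → Bool)) :
    cylDensity μ U [] = μ.real U := by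
  simp [cylDensity, cyl_nil]

theorem isAveraging_cylDensity (μ : Measure (ℕ → Bool)) [IsFiniteMeasure μ]
    (U : Set (ℕ → Bool)) : IsAveraging (cylDensity μ U) := by
  intro s
  have htrue : U ∩ cyl s ∩ cyl (s ++ [true]) = U ∩ cyl (s ++ [true]) := by
    ext β; simp only [Set.mem_inter_iff, mem_cyl_append_singleton]; tauto
  have hfalse : (U ∩ cyl s) \ cyl (s ++ [true]) = U ∩ cyl (s ++ [false]) := by
    ext β
    simp only [Set.mem_sdiff, Set.mem_inter_iff, mem_cyl_append_singleton]
    cases β s.length <;> simp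
  have hadd : μ.real (U ∩ cyl (s ++ [true])) + μ.real (U ∩ cyl (s ++ [false]))
      = μ.real (U ∩ cyl s) := by
    rw [← htrue, ← hfalse]
    exact measureReal_inter_add_sdiff (isClopen_cyl _).isOpen.measurableSet
  simp only [cylDensity, List.length_append, List.length_singleton, ← hadd]
  ring

theorem cylDensity_of_subset {μ : Measure (ℕ → Bool)}
    (hμ : ∀ s, μ (cyl s) = (1 / 2 : ℝ≥0∞) ^ s.length) {U : Set (ℕ → Bool)} {s : List Bool}
    (h : cyl s ⊆ U) : cylDensity μ U s = 1 := by
  rw [cylDensity, Set.inter_eq_right.2 h, measureReal_def, hμ]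
  simp

theorem cylDensity_of_subset_compl (μ : Measure (ℕ → Bool)) {U : Set (ℕ → Bool)}
    {s : List Bool} (h : cyl s ⊆ Uᶜ) : cylDensity μ U s = 0 := by
  rw [cylDensity, (Set.disjoint_left.2 fun _ hU hs => h hs hU : Disjoint U (cyl s)).inter_eq]
  simp

theorem eventually_cylDensity_eq_one {μ : Measure (ℕ → Bool)}
    (hμ : ∀ s, μ (cyl s) = (1 / 2 : ℝ≥0∞) ^ s.length) {U : Set (ℕ → Bool)} (hU : IsOpen U)
    {β : ℕ → Bool} (hβ : β ∈ U) : ∀ᶠ l in atTop, cylDensity μ U (seg β l) = 1 :=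
  (eventually_cyl_seg_subset hU hβ).mono fun _ => cylDensity_of_subset hμ

theorem eventuallyConst_cylDensity {μ : Measure (ℕ → Bool)}
    (hμ : ∀ s, μ (cyl s) = (1 / 2 : ℝ≥0∞) ^ s.length) {U : Set (ℕ → Bool)} (hU : IsClopen U)
    (β : ℕ → Bool) : EventuallyConst (fun l => cylDensity μ U (seg β l)) atTop := by
  rw [eventuallyConst_iff_exists_eventuallyEq]
  by_cases hβ : β ∈ U
  · exact ⟨1, eventually_cylDensity_eq_one hμ hU.isOpen hβ⟩
  · exact ⟨0, (eventually_cyl_seg_subset hU.compl.isOpen hβ).mono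
      fun _ => cylDensity_of_subset_compl μ⟩

@[elab_as_elim]
theorem prefix_induction {α : Type*} {s : List α} {motive : (t : List α) → s <+: t → Prop}
    (base : motive s List.prefix_rfl)
    (append_singleton : ∀ t b (h : s <+: t), motive t h →
      motive (t ++ [b]) (h.trans (List.prefix_append t [b])))
    (t : List α) (h : s <+: t) : motive t h := by
  obtain ⟨u, rfl⟩ := h
  induction u using List.reverseRecOn with
  | nil => simpa only [List.append_nil] using base
  | append_singleton u b ih =>
    simpa only [List.append_assoc] using append_singleton _ b (List.prefix_append s u) ih

/-- The capital process `f`, stopped the first time its value is at least `θ`. -/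
noncomputable def stopAt (θ : ℝ) (f : List Bool → ℝ) (s : List Bool) : ℝ :=
  s.reverseRecOn (f []) fun s b a => if θ ≤ a then a else f (s ++ [b])

section stopAt

variable {θ : ℝ} {f : List Bool → ℝ} {s t : List Bool}

theorem stopAt_nil (θ : ℝ) (f : List Bool → ℝ) : stopAt θ f [] = f [] := by
  simp [stopAt]

theorem stopAt_append_singleton (θ : ℝ) (f : List Bool → ℝ) (s : List Bool) (b : Bool) :
    stopAt θ f (s ++ [b]) = if θ ≤ stopAt θ f s then stopAt θ f s else f (s ++ [b]) := by
  rw [stopAt, List.reverseRecOn_concat]; rfl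

theorem stopAt_eq_of_lt (h : stopAt θ f s < θ) : stopAt θ f s = f s := by
  induction s using List.reverseRecOn with
  | nil => exact stopAt_nil θ f
  | append_singleton s b _ =>
    rw [stopAt_append_singleton] at h ⊢
    split_ifs at h ⊢ with hs
    · exact absurd hs h.not_ge
    · rfl

theorem le_stopAt_of_le (h : θ ≤ f s) : θ ≤ stopAt θ f s := by
  by_contra! hlt
  exact (stopAt_eq_of_lt hlt ▸ hlt).not_ge h

theorem stopAt_eq_of_isPrefix (h : θ ≤ stopAt θ f s) (hst : s <+: t) :
    stopAt θ f t = stopAt θ f s := by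
  induction t, hst using prefix_induction with
  | base => rfl
  | append_singleton t b _ ih => rw [stopAt_append_singleton, ih, if_pos h]

theorem stopAt_append_singleton_of_eq {b : Bool} (h : f (s ++ [b]) = f s) :
    stopAt θ f (s ++ [b]) = stopAt θ f s := by
  rw [stopAt_append_singleton]
  split_ifs with hs
  · rfl
  · rw [h, stopAt_eq_of_lt (not_le.1 hs)]

theorem stopAt_nonneg (h0 : ∀ s, 0 ≤ f s) (s : List Bool) : 0 ≤ stopAt θ f s := by
  induction s using List.reverseRecOn with
  | nil => exact (h0 _).trans_eq (stopAt_nil θ f).symm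
  | append_singleton s b ih =>
    rw [stopAt_append_singleton]
    split_ifs
    exacts [ih, h0 _]

theorem IsAveraging.stopAt (hf : IsAveraging f) (θ : ℝ) : IsAveraging (stopAt θ f) := by
  intro s
  simp only [stopAt_append_singleton]
  split_ifs with hs
  · ring
  · rw [stopAt_eq_of_lt (not_le.1 hs), hf s]

end stopAt

/-- The average of the `J` copies of the capital process `f` in which the `j`-th one is scaled
by `2 ^ j` and stopped at `1`. At any time, all capital except that of the copies that are still
below `1` has been secured, and these hold at most `1 + 1/2 + 1/4 + ⋯` in total. -/
noncomputable def ladder (J : ℕ) (f : List Bool → ℝ) (s : List Bool) : ℝ :=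
  (∑ j ∈ Finset.range J, stopAt 1 (fun t => 2 ^ j * f t) s) / J

section ladder

variable {J : ℕ} {f : List Bool → ℝ} {s t : List Bool}

theorem IsAveraging.ladder (hf : IsAveraging f) (J : ℕ) : IsAveraging (ladder J f) :=
  (finset_sum (fun j => (hf.const_mul (2 ^ j)).stopAt 1) _).div_const _

theorem ladder_nonneg (h0 : ∀ s, 0 ≤ f s) (s : List Bool) : 0 ≤ ladder J f s :=
  div_nonneg (Finset.sum_nonneg fun _ _ =>
    stopAt_nonneg (fun t => mul_nonneg (by positivity) (h0 t)) s) J.cast_nonneg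

theorem ladder_nil_le (h0 : 0 ≤ f []) (J : ℕ) : ladder J f [] ≤ 2 ^ J * f [] := by
  refine div_le_of_le_mul₀ J.cast_nonneg (by positivity) ?_
  have hterm (j : ℕ) (hj : j ∈ Finset.range J) :
      stopAt 1 (fun t => 2 ^ j * f t) [] ≤ 2 ^ J * f [] := by
    rw [stopAt_nil]
    gcongr
    · norm_num
    · exact (Finset.mem_range.1 hj).le
  refine (Finset.sum_le_card_nsmul _ _ _ hterm).trans_eq ?_
  rw [Finset.card_range, nsmul_eq_mul, mul_comm]

theorem one_le_ladder (hJ : J ≠ 0) (h : 1 ≤ f s) : 1 ≤ ladder J f s := by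
  rw [ladder, one_le_div (by positivity)]
  have hterm (j : ℕ) : 1 ≤ stopAt 1 (fun t => 2 ^ j * f t) s :=
    le_stopAt_of_le (one_le_mul_of_one_le_of_one_le (one_le_pow₀ one_le_two) h)
  simpa using Finset.card_nsmul_le_sum (Finset.range J) _ 1 fun j _ => hterm j

theorem sum_two_pow_mul_of_lt_one_le {a : ℝ} (ha : 0 ≤ a) (J : ℕ) :
    ∑ j ∈ Finset.range J, (if 2 ^ j * a < 1 then 2 ^ j * a else 0) ≤ min (2 ^ J * a) 2 := by
  induction J with
  | zero => simp [ha]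
  | succ J ih =>
    rw [le_min_iff] at ih ⊢
    rw [Finset.sum_range_succ, pow_succ]
    split_ifs with h <;> constructor <;> linarith

theorem ladder_le_add_of_isPrefix (h0 : ∀ s, 0 ≤ f s) (hst : s <+: t) :
    ladder J f s ≤ ladder J f t + 2 / J := by
  have hterm (j : ℕ) : stopAt 1 (fun r => 2 ^ j * f r) s ≤
      stopAt 1 (fun r => 2 ^ j * f r) t + if 2 ^ j * f s < 1 then 2 ^ j * f s else 0 := by
    rcases le_or_gt 1 (stopAt 1 (fun r => 2 ^ j * f r) s) with hs | hs
    · rw [stopAt_eq_of_isPrefix hs hst]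
      exact le_add_of_nonneg_right (by split_ifs <;> simp [h0])
    · have ht := stopAt_nonneg (θ := 1) (fun r => mul_nonneg (pow_nonneg zero_le_two j) (h0 r)) t
      have hlt := stopAt_eq_of_lt hs ▸ hs
      rw [stopAt_eq_of_lt hs, if_pos hlt]
      exact le_add_of_nonneg_left ht
  rw [ladder, ladder, ← add_div]
  gcongr
  refine (Finset.sum_le_sum fun j _ => hterm j).trans ?_
  rw [Finset.sum_add_distrib]
  gcongr
  exact (sum_two_pow_mul_of_lt_one_le (h0 s) J).trans (min_le_right _ _)

theorem eventuallyConst_ladder {β : ℕ → Bool}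
    (h : EventuallyConst (fun l => f (seg β l)) atTop) (J : ℕ) :
    EventuallyConst (fun l => ladder J f (seg β l)) atTop := by
  rw [eventuallyConst_atTop_nat] at h ⊢
  obtain ⟨n, hn⟩ := h
  refine ⟨n, fun m hm => ?_⟩
  have hstep := hn m hm
  simp only [seg_succ] at hstep ⊢
  simp only [ladder]
  congr 1
  exact Finset.sum_congr rfl fun j _ => stopAt_append_singleton_of_eq (by rw [hstep])

end ladder

/-- Along the sequence `a`, the later terms do not fall below the current one by more than an
amount that tends to `0`. This is the form in which convergence is established: it passes to sums
of processes, which need not be bounded, and to the capped process. -/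
def HasVanishingDrawdown (a : ℕ → ℝ) : Prop :=
  ∀ δ > 0, ∀ᶠ p in atTop, ∀ q ≥ p, a p ≤ a q + δ

theorem HasVanishingDrawdown.exists_tendsto {a : ℕ → ℝ} (ha : HasVanishingDrawdown a)
    (hbdd : BddAbove (Set.range a)) : ∃ x, Tendsto a atTop (𝓝 x) := by
  have hbelow : IsBoundedUnder (· ≥ ·) atTop a := by
    obtain ⟨p, hp⟩ := (ha 1 one_pos).exists
    exact isBoundedUnder_of_eventually_ge <| (eventually_ge_atTop p).mono fun q hq =>
      sub_le_iff_le_add.2 (hp q hq)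
  refine tendsto_of_no_upcrossings dense_univ ?_ hbdd.isBoundedUnder_of_range hbelow
  rintro x - y - hxy ⟨hx, hy⟩
  obtain ⟨p, hyp, hp⟩ := (hy.and_eventually (ha (y - x) (sub_pos.2 hxy))).exists
  obtain ⟨q, hqx, hpq⟩ := (hx.and_eventually (eventually_ge_atTop p)).exists
  linarith [hp q hpq]

theorem HasVanishingDrawdown.tsum {ι : Type*} {a : ι → ℕ → ℝ} {c : ι → ℝ}
    (hconst : ∀ k, EventuallyConst (a k) atTop)
    (hdrop : ∀ k p q, p ≤ q → a k p ≤ a k q + c k) (hc : Summable c)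
    (hsum : ∀ l, Summable fun k => a k l) : HasVanishingDrawdown fun l => ∑' k, a k l := by
  classical
  let d (p : ℕ) (k : ι) : ℝ := if ∀ q ≥ p, a k q = a k p then 0 else c k
  have hc0 (k : ι) : 0 ≤ c k := (le_add_iff_nonneg_right _).1 (hdrop k 0 0 le_rfl)
  have hd0 (p : ℕ) (k : ι) : 0 ≤ d p k := by dsimp only [d]; split_ifs <;> simp [hc0]
  have hdc (p : ℕ) (k : ι) : d p k ≤ c k := by dsimp only [d]; split_ifs <;> simp [hc0]
  have hdrop' (k : ι) (p q : ℕ) (hpq : p ≤ q) : a k p ≤ a k q + d p k := by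
    dsimp only [d]
    split_ifs with h
    · rw [h q hpq, add_zero]
    · exact hdrop k p q hpq
  have hlim (k : ι) : Tendsto (fun p => d p k) atTop (𝓝 0) := by
    obtain ⟨n, hn⟩ := eventuallyConst_atTop.1 (hconst k)
    refine tendsto_const_nhds.congr' ((eventually_ge_atTop n).mono fun p hp => ?_)
    exact (if_pos fun q hq => (hn q (hp.trans hq)).trans (hn p hp).symm).symm
  have htsum : Tendsto (fun p => ∑' k, d p k) atTop (𝓝 0) := by
    simpa using tendsto_tsum_of_dominated_convergence hc hlim
      (.of_forall fun p k => (Real.norm_of_nonneg (hd0 p k)).trans_le (hdc p k))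
  intro δ hδ
  filter_upwards [htsum.eventually_le_const hδ] with p hp q hpq
  have hd : Summable (d p) := hc.of_nonneg_of_le (hd0 p) (hdc p)
  calc ∑' k, a k p ≤ ∑' k, (a k q + d p k) :=
        (hsum p).tsum_le_tsum (fun k => hdrop' k p q hpq) ((hsum q).add hd)
    _ = ∑' k, a k q + ∑' k, d p k := (hsum q).tsum_add hd
    _ ≤ ∑' k, a k q + δ := by gcongr

theorem isFiniteMeasure_of_measure_cyl {μ : Measure (ℕ → Bool)}
    (hμ : ∀ s, μ (cyl s) = (1 / 2 : ℝ≥0∞) ^ s.length) : IsFiniteMeasure μ :=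
  ⟨by simp [← cyl_nil, hμ]⟩

theorem exists_isAveraging_hasVanishingDrawdown {μ : Measure (ℕ → Bool)}
    (hμ : ∀ s, μ (cyl s) = (1 / 2 : ℝ≥0∞) ^ s.length) {G : Set (ℕ → Bool)} (hG : μ G = 0)
    {ε : ℝ} (hε : 0 < ε) :
    ∃ S : List Bool → ℝ, IsAveraging S ∧ (∀ s, 0 ≤ S s) ∧ S [] ≤ ε ∧
      (∀ β, HasVanishingDrawdown fun l => S (seg β l)) ∧ ∀ β ∈ G, ∃ l, 1 ≤ S (seg β l) := by
  have := isFiniteMeasure_of_measure_cyl hμ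
  obtain ⟨U, hU, hUε, hGU⟩ := exists_isClopen_cover_measureReal_le
    isTopologicalBasis_isClopen hG
    (ε := fun k => ε / 2 / 2 ^ k / 2 ^ 2 ^ k) fun k => by positivity
  let y (k : ℕ) : List Bool → ℝ := ladder (2 ^ k) (cylDensity μ (U k))
  have hy (k : ℕ) : IsAveraging (y k) := (isAveraging_cylDensity μ (U k)).ladder _
  have hy0 (k : ℕ) (s : List Bool) : 0 ≤ y k s := ladder_nonneg (cylDensity_nonneg μ (U k)) s
  have hynil (k : ℕ) : y k [] ≤ ε / 2 / 2 ^ k := by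
    refine (ladder_nil_le (cylDensity_nonneg μ (U k) []) _).trans ?_
    rw [cylDensity_nil, mul_comm]
    exact (le_div_iff₀ (by positivity)).1 (hUε k)
  have hsumnil : Summable fun k => y k [] :=
    (summable_geometric_two' ε).of_nonneg_of_le (fun k => hy0 k []) hynil
  have hsum := IsAveraging.summable hy hy0 hsumnil
  refine ⟨fun s => ∑' k, y k s, .tsum hy hsum, fun s => tsum_nonneg fun k => hy0 k s, ?_,
    fun β => ?_, fun β hβ => ?_⟩
  · exact (hsumnil.tsum_le_tsum hynil (summable_geometric_two' ε)).trans_eq (tsum_geometric_two' ε)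
  · refine .tsum (c := fun k => 2 / ((2 ^ k : ℕ) : ℝ))
      (fun k => eventuallyConst_ladder (eventuallyConst_cylDensity hμ (hU k) β) _)
      (fun k p q hpq =>
        ladder_le_add_of_isPrefix (cylDensity_nonneg μ (U k)) (seg_prefix_seg β hpq))
      ?_ fun l => hsum (seg β l)
    simpa [div_eq_mul_inv] using summable_geometric_two.mul_left 2
  · obtain ⟨k, hk⟩ := Set.mem_iUnion.1 (hGU hβ)
    obtain ⟨l, hl⟩ := (eventually_cylDensity_eq_one hμ (hU k).isOpen hk).exists
    refine ⟨l, (one_le_ladder (pow_ne_zero k two_ne_zero) hl.ge).trans ?_⟩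
    exact (hsum _).le_tsum k fun j _ => hy0 j _

/-- The capital of a gambler who places the same bets as the capital process `S`, except that the
stake is never larger than the distance of the capital to `1`. So `1` is never exceeded, and it
is reached exactly rather than only approached. -/
noncomputable def cap (S : List Bool → ℝ) (s : List Bool) : ℝ :=
  s.reverseRecOn (min 1 (S [])) fun s b a => a + max (-(1 - a)) (min (1 - a) (S (s ++ [b]) - S s))

section cap

variable {S : List Bool → ℝ} {s t : List Bool}

theorem cap_nil (S : List Bool → ℝ) : cap S [] = min 1 (S []) := by
  simp [cap]

theorem cap_append_singleton (S : List Bool → ℝ) (s : List Bool) (b : Bool) :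
    cap S (s ++ [b]) =
      cap S s + max (-(1 - cap S s)) (min (1 - cap S s) (S (s ++ [b]) - S s)) := by
  rw [cap, List.reverseRecOn_concat]; rfl

theorem cap_le_one (S : List Bool → ℝ) (s : List Bool) : cap S s ≤ 1 := by
  induction s using List.reverseRecOn with
  | nil => exact cap_nil S ▸ min_le_left _ _
  | append_singleton s b ih =>
    have hmax : max (-(1 - cap S s)) (min (1 - cap S s) (S (s ++ [b]) - S s)) ≤ 1 - cap S s :=
      max_le (by linarith) (min_le_left _ _)
    rw [cap_append_singleton]
    linarith

theorem cap_eq_one_of_isPrefix (h : cap S s = 1) (hst : s <+: t) : cap S t = 1 := by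
  induction t, hst using prefix_induction with
  | base => exact h
  | append_singleton t b _ ih => simp [cap_append_singleton, ih]

theorem cap_append_singleton_eq_one_or_le (S : List Bool → ℝ) (s : List Bool) (b : Bool) :
    cap S (s ++ [b]) = 1 ∨ cap S s - S s ≤ cap S (s ++ [b]) - S (s ++ [b]) := by
  rw [cap_append_singleton]
  rcases le_total (1 - cap S s) (S (s ++ [b]) - S s) with h | h
  · left
    rw [min_eq_left h, max_eq_right (by linarith [cap_le_one S s])]
    ring
  · right
    rw [min_eq_right h]
    linarith [le_max_right (-(1 - cap S s)) (S (s ++ [b]) - S s)]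

theorem cap_eq_one_or_le_of_isPrefix (hst : s <+: t) :
    cap S t = 1 ∨ cap S s - S s ≤ cap S t - S t := by
  induction t, hst using prefix_induction with
  | base => exact .inr le_rfl
  | append_singleton t b _ ih =>
    rcases ih with h | h
    · exact .inl (cap_eq_one_of_isPrefix h (List.prefix_append t [b]))
    · exact (cap_append_singleton_eq_one_or_le S t b).imp_right h.trans

theorem cap_eq_one_or_le (S : List Bool → ℝ) (s : List Bool) : cap S s = 1 ∨ S s ≤ cap S s := by
  rcases le_total 1 (S []) with h | h
  · exact .inl (cap_eq_one_of_isPrefix ((cap_nil S).trans (min_eq_left h)) List.nil_prefix)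
  · refine (cap_eq_one_or_le_of_isPrefix List.nil_prefix).imp_right fun hle => ?_
    rwa [cap_nil, min_eq_right h, sub_self, sub_nonneg] at hle

theorem cap_nonneg (h0 : ∀ s, 0 ≤ S s) (s : List Bool) : 0 ≤ cap S s := by
  rcases cap_eq_one_or_le S s with h | h
  · exact h ▸ zero_le_one
  · exact (h0 s).trans h

theorem cap_eq_one_of_one_le (h : 1 ≤ S s) : cap S s = 1 :=
  (cap_eq_one_or_le S s).elim id fun hle => (cap_le_one S s).antisymm (h.trans hle)

theorem IsAveraging.cap (hS : IsAveraging S) : IsAveraging (cap S) := by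
  intro s
  have hneg : S (s ++ [true]) - S s = -(S (s ++ [false]) - S s) := by
    linarith [hS.add_eq s]
  simp only [cap_append_singleton, hneg]
  have hodd (c x : ℝ) (hc : 0 ≤ c) : max (-c) (min c (-x)) = -max (-c) (min c x) := by
    rw [max_min_distrib_left, max_eq_right (neg_le_self hc), ← min_neg_neg, ← max_neg_neg, neg_neg]
  rw [hodd _ _ (sub_nonneg.2 (cap_le_one S s))]
  ring

theorem HasVanishingDrawdown.cap {β : ℕ → Bool} (h : HasVanishingDrawdown fun l => S (seg β l)) :
    HasVanishingDrawdown fun l => cap S (seg β l) := by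
  intro δ hδ
  filter_upwards [h δ hδ] with p hp q hpq
  rcases cap_eq_one_or_le_of_isPrefix (S := S) (seg_prefix_seg β hpq) with hq | hq
  · rw [hq]
    linarith [cap_le_one S (seg β p)]
  · linarith [hp q hpq]

end cap

theorem exists_isMartingale_eventually_eq_one {μ : Measure (ℕ → Bool)}
    (hμ : ∀ s, μ (cyl s) = (1 / 2 : ℝ≥0∞) ^ s.length) {G : Set (ℕ → Bool)} (hG : μ G = 0)
    {ε : ℝ} (hε : 0 < ε) :
    ∃ m : List Bool → ℝ, IsMartingale m ∧ m [] ≤ ε ∧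
      (∀ β, ∃ x, Tendsto (fun l => m (seg β l)) atTop (𝓝 x)) ∧
      ∀ β ∈ G, ∀ᶠ l in atTop, m (seg β l) = 1 := by
  obtain ⟨S, hS, hS0, hSε, hSdrop, hSG⟩ := exists_isAveraging_hasVanishingDrawdown hμ hG hε
  have hmem (s : List Bool) : cap S s ∈ Set.Icc (0 : ℝ) 1 := ⟨cap_nonneg hS0 s, cap_le_one S s⟩
  refine ⟨cap S, ⟨hmem, hS.cap⟩, cap_nil S ▸ (min_le_right _ _).trans hSε, fun β => ?_,
    fun β hβ => ?_⟩
  · exact (hSdrop β).cap.exists_tendsto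
      ⟨1, Set.forall_mem_range.2 fun l => (hmem _).2⟩
  · obtain ⟨l, hl⟩ := hSG β hβ
    exact (eventually_ge_atTop l).mono fun k hk =>
      cap_eq_one_of_isPrefix (cap_eq_one_of_one_le hl) (seg_prefix_seg β hk)

/-- A process that can run a climb starting at the node `t`: a martingale, rescaled so as to take
values in `[-1/2, 1]` and to vanish at `t`, that converges along every branch and settles at `1`
along those in `G`. -/
structure IsClimber (G : Set (ℕ → Bool)) (t : List Bool) (g : List Bool → ℝ) : Prop where
  isAveraging : IsAveraging g
  mem_Icc : ∀ s, g s ∈ Set.Icc (-1 / 2 : ℝ) 1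
  eq_zero : g t = 0
  exists_tendsto : ∀ β, ∃ x, Tendsto (fun l => g (seg β l)) atTop (𝓝 x)
  eventually_eq_one : ∀ β ∈ G, ∀ᶠ l in atTop, g (seg β l) = 1

theorem exists_isClimber {μ : Measure (ℕ → Bool)}
    (hμ : ∀ s, μ (cyl s) = (1 / 2 : ℝ≥0∞) ^ s.length) {G : Set (ℕ → Bool)} (hG : μ G = 0)
    (t : List Bool) : ∃ g, IsClimber G t g := by
  obtain ⟨m, ⟨hmem, havg⟩, hnil, hlim, hone⟩ :=
    exists_isMartingale_eventually_eq_one hμ hG (ε := 1 / 3 / 2 ^ t.length) (by positivity)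
  have hmt : m t ≤ 1 / 3 :=
    (IsAveraging.le_two_pow_mul havg (fun s => (hmem s).1) t).trans
      ((le_div_iff₀' (by positivity)).1 hnil)
  have hpos : 0 < 1 - m t := by linarith
  refine ⟨fun s => (m s - m t) / (1 - m t), fun s => ?_, fun s => ⟨?_, ?_⟩, ?_, fun β => ?_,
    fun β hβ => ?_⟩
  · rw [havg s]; ring
  · rw [le_div_iff₀ hpos]
    linarith [(hmem s).1]
  · rw [div_le_one hpos]
    linarith [(hmem s).2]
  · rw [sub_self, zero_div]
  · obtain ⟨x, hx⟩ := hlim β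
    exact ⟨_, (hx.sub_const _).div_const _⟩
  · exact (hone β hβ).mono fun l hl => by rw [hl, div_self hpos.ne']

open Classical in
/-- The state of the alternating strategy at a node: the number of completed climbs, and the node
at which the current climb, run by `g t` with `t` that node, was started. A climb is
completed when its climber is at `1`; the wait for `cyl s ⊆ O n` ensures that infinitely many
climbs are completed only along branches in `⋂ n, O n`. -/
noncomputable def phase (g : List Bool → List Bool → ℝ) (O : ℕ → Set (ℕ → Bool))
    (s : List Bool) : ℕ × List Bool :=
  s.reverseRecOn (0, []) fun s b σ =>
    if g σ.2 (s ++ [b]) = 1 ∧ cyl (s ++ [b]) ⊆ O σ.1 then (σ.1 + 1, s ++ [b]) else σ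

/-- The affine map taking the values `0` and `1` of a climber to `1/4` and `3/4` in the even
phases, and to `3/4` and `1/4` in the odd ones. -/
noncomputable def swing (n : ℕ) (x : ℝ) : ℝ :=
  if Even n then 1 / 4 + x / 2 else 3 / 4 - x / 2

/-- The martingale that moves alternately from `1/4` up to `3/4` and back, each move being run
by a climber. -/
noncomputable def alternating (g : List Bool → List Bool → ℝ) (O : ℕ → Set (ℕ → Bool))
    (s : List Bool) : ℝ :=
  swing (phase g O s).1 (g (phase g O s).2 s)

theorem swing_one (n : ℕ) : swing n 1 = swing (n + 1) 0 := by
  by_cases h : Even n <;> norm_num [swing, h, Nat.even_add_one]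

theorem abs_swing_zero_sub_swing_succ_zero (n : ℕ) : |swing n 0 - swing (n + 1) 0| = 1 / 2 := by
  by_cases h : Even n <;> norm_num [swing, h, Nat.even_add_one]

theorem swing_mem_Icc (n : ℕ) {x : ℝ} (hx : x ∈ Set.Icc (-1 / 2 : ℝ) 1) :
    swing n x ∈ Set.Icc (0 : ℝ) 1 := by
  obtain ⟨hlow, hhigh⟩ := hx
  unfold swing
  split_ifs <;> constructor <;> linarith

theorem continuous_swing (n : ℕ) : Continuous (swing n) := by
  unfold swing
  split_ifs <;> fun_prop

theorem IsAveraging.swing {f : List Bool → ℝ} (hf : IsAveraging f) (n : ℕ) :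
    IsAveraging fun s => swing n (f s) := fun s => by
  have := hf.add_eq s
  dsimp only [_root_.swing]
  split_ifs <;> linarith

section phase

variable (g : List Bool → List Bool → ℝ) (O : ℕ → Set (ℕ → Bool))

theorem phase_nil : phase g O [] = (0, []) := by
  simp [phase]

open Classical in
theorem phase_append_singleton (s : List Bool) (b : Bool) :
    phase g O (s ++ [b]) =
      if g (phase g O s).2 (s ++ [b]) = 1 ∧ cyl (s ++ [b]) ⊆ O (phase g O s).1
      then ((phase g O s).1 + 1, s ++ [b]) else phase g O s := by
  rw [phase, List.reverseRecOn_concat]; rfl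

variable {g O}

theorem phase_append_singleton_of_ne {s : List Bool} {b : Bool}
    (h : phase g O (s ++ [b]) ≠ phase g O s) :
    cyl (s ++ [b]) ⊆ O (phase g O s).1 ∧
      phase g O (s ++ [b]) = ((phase g O s).1 + 1, s ++ [b]) := by
  rw [phase_append_singleton] at h ⊢
  split_ifs at h ⊢ with hs
  · exact ⟨hs.2, rfl⟩
  · exact absurd rfl h

theorem phase_snd_isPrefix (s : List Bool) : (phase g O s).2 <+: s := by
  induction s using List.reverseRecOn with
  | nil => rw [phase_nil]
  | append_singleton s b ih =>
    by_cases h : phase g O (s ++ [b]) = phase g O s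
    · exact h ▸ ih.trans (List.prefix_append s [b])
    · rw [(phase_append_singleton_of_ne h).2]

theorem phase_phase_snd (s : List Bool) : phase g O (phase g O s).2 = phase g O s := by
  induction s using List.reverseRecOn with
  | nil => rw [phase_nil, phase_nil]
  | append_singleton s b ih =>
    by_cases h : phase g O (s ++ [b]) = phase g O s
    · rw [h, ih]
    · exact congrArg (phase g O) (congrArg Prod.snd (phase_append_singleton_of_ne h).2)

theorem monotone_phase_fst (β : ℕ → Bool) : Monotone fun l => (phase g O (seg β l)).1 := by
  refine monotone_nat_of_le_succ fun l => ?_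
  rw [seg_succ]
  by_cases h : phase g O (seg β l ++ [β l]) = phase g O (seg β l)
  · rw [h]
  · rw [(phase_append_singleton_of_ne h).2]
    exact Nat.le_succ _

theorem mem_of_lt_phase_fst {β : ℕ → Bool} {i l : ℕ} (h : i < (phase g O (seg β l)).1) :
    β ∈ O i := by
  induction l with
  | zero => simp [seg, phase_nil] at h
  | succ l ih =>
    by_cases hl : phase g O (seg β (l + 1)) = phase g O (seg β l)
    · exact ih (hl ▸ h)
    · rw [seg_succ] at hl h
      obtain ⟨hsub, hphase⟩ := phase_append_singleton_of_ne hl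
      rw [hphase] at h
      rcases Nat.lt_succ_iff_lt_or_eq.1 h with hlt | rfl
      · exact ih hlt
      · exact hsub (seg_succ β l ▸ mem_cyl_seg β (l + 1))

theorem frequently_phase_eq {β : ℕ → Bool}
    (h : ¬ EventuallyConst (fun l => phase g O (seg β l)) atTop) :
    ∃ᶠ l in atTop,
      phase g O (seg β (l + 1)) = ((phase g O (seg β l)).1 + 1, seg β (l + 1)) := by
  simp only [eventuallyConst_atTop_nat, not_exists, not_forall] at h
  refine frequently_atTop.2 fun N => ?_
  obtain ⟨l, hl, hne⟩ := h N
  refine ⟨l, hl, ?_⟩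
  rw [seg_succ] at hne ⊢
  exact (phase_append_singleton_of_ne hne).2

theorem exists_le_phase_fst {β : ℕ → Bool}
    (h : ¬ EventuallyConst (fun l => phase g O (seg β l)) atTop) (n : ℕ) :
    ∃ l, n ≤ (phase g O (seg β l)).1 := by
  induction n with
  | zero => exact ⟨0, Nat.zero_le _⟩
  | succ n ih =>
    obtain ⟨l, hl⟩ := ih
    obtain ⟨k, hlk, hk⟩ := frequently_atTop.1 (frequently_phase_eq h) l
    exact ⟨k + 1, hk ▸ Nat.succ_le_succ (hl.trans (monotone_phase_fst β hlk))⟩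

theorem mem_iInter_of_not_eventuallyConst_phase {β : ℕ → Bool}
    (h : ¬ EventuallyConst (fun l => phase g O (seg β l)) atTop) : β ∈ ⋂ n, O n :=
  Set.mem_iInter.2 fun n => mem_of_lt_phase_fst (exists_le_phase_fst h (n + 1)).choose_spec

end phase

section alternating

variable {g : List Bool → List Bool → ℝ} {O : ℕ → Set (ℕ → Bool)} {β : ℕ → Bool}

theorem not_eventuallyConst_phase (hg : ∀ t, ∀ᶠ l in atTop, g t (seg β l) = 1)
    (hO : ∀ n, IsOpen (O n)) (hβ : β ∈ ⋂ n, O n) :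
    ¬ EventuallyConst (fun l => phase g O (seg β l)) atTop := by
  rw [eventuallyConst_atTop]
  rintro ⟨n, hn⟩
  have hev := (hg (phase g O (seg β n)).2).and
    (eventually_cyl_seg_subset (hO (phase g O (seg β n)).1) (Set.mem_iInter.1 hβ _))
  obtain ⟨l, hl⟩ := eventually_atTop.1 hev
  have hstep := phase_append_singleton g O (seg β (max n l)) (β (max n l))
  rw [← seg_succ, hn (max n l) (by omega), hn (max n l + 1) (by omega),
    if_pos (hl _ (by omega))] at hstep
  simpa using congrArg Prod.fst hstep

theorem tendsto_alternating {n : ℕ} {t : List Bool} {x : ℝ}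
    (h : ∀ᶠ l in atTop, phase g O (seg β l) = (n, t))
    (hx : Tendsto (fun l => g t (seg β l)) atTop (𝓝 x)) :
    Tendsto (fun l => alternating g O (seg β l)) atTop (𝓝 (swing n x)) :=
  (((continuous_swing n).tendsto x).comp hx).congr' <| h.mono fun l hl => by
    simp [alternating, hl]

theorem alternating_append_singleton (hg : ∀ t, g t t = 0) (s : List Bool) (b : Bool) :
    alternating g O (s ++ [b]) = swing (phase g O s).1 (g (phase g O s).2 (s ++ [b])) := by
  rw [alternating, phase_append_singleton]
  split_ifs with h
  · rw [hg, h.1, swing_one]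
  · rfl

theorem isMartingale_alternating {G : Set (ℕ → Bool)} (hg : ∀ t, IsClimber G t (g t)) :
    IsMartingale (alternating g O) := by
  refine ⟨fun s => swing_mem_Icc _ ((hg _).mem_Icc s), fun s => ?_⟩
  simp only [alternating_append_singleton fun t => (hg t).eq_zero]
  exact (hg _).isAveraging.swing _ s

theorem alternating_eq_swing_zero (hg : ∀ t, g t t = 0) {s : List Bool} {n : ℕ}
    (h : phase g O s = (n, s)) : alternating g O s = swing n 0 := by
  simp [alternating, h, hg]

theorem exists_abs_alternating_sub_eq (hg : ∀ t, g t t = 0)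
    (h : ¬ EventuallyConst (fun l => phase g O (seg β l)) atTop) (N : ℕ) :
    ∃ p ≥ N, ∃ q ≥ N,
      |alternating g O (seg β p) - alternating g O (seg β q)| = 1 / 2 := by
  have hfreq := frequently_atTop.1 (frequently_phase_eq h)
  obtain ⟨i, hi, hiphase⟩ := hfreq N
  obtain ⟨j, hj, hjphase⟩ := hfreq (i + 1)
  set k := (phase g O (seg β j)).2.length with hk
  have hkphase : phase g O (seg β k) = ((phase g O (seg β j)).1, seg β k) := by
    rw [hk, seg_length_eq_of_isPrefix (phase_snd_isPrefix _), phase_phase_snd]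
  have hik : i < k := by
    refine (monotone_phase_fst (g := g) (O := O) β).reflect_lt ?_
    calc (phase g O (seg β i)).1 < (phase g O (seg β (i + 1))).1 := hiphase ▸ Nat.lt_succ_self _
      _ ≤ (phase g O (seg β j)).1 := monotone_phase_fst β hj
      _ = (phase g O (seg β k)).1 := hkphase ▸ rfl
  refine ⟨k, by omega, j + 1, by omega, ?_⟩
  rw [alternating_eq_swing_zero hg hkphase, alternating_eq_swing_zero hg hjphase]
  exact abs_swing_zero_sub_swing_succ_zero _

theorem osc_alternating_mem_Icc_of_mem (hg : ∀ t, IsClimber (⋂ n, O n) t (g t))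
    (hO : ∀ n, IsOpen (O n)) (hβ : β ∈ ⋂ n, O n) :
    osc (alternating g O) β ∈ Set.Icc (1 / 2 : ℝ) 1 := by
  have hf : IsMartingale (alternating g O) := isMartingale_alternating hg
  have hphase := not_eventuallyConst_phase (fun t => (hg t).eventually_eq_one β hβ) hO hβ
  refine ⟨le_osc (fun _ _ => hf.abs_sub_le_one _ _) fun N => ?_,
    osc_le 0 fun _ _ _ _ => hf.abs_sub_le_one _ _⟩
  obtain ⟨p, hp, q, hq, hpq⟩ := exists_abs_alternating_sub_eq (fun t => (hg t).eq_zero) hphase N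
  exact ⟨p, hp, q, hq, hpq.ge⟩

theorem osc_alternating_eq_zero_of_notMem
    (hg : ∀ t, ∃ x, Tendsto (fun l => g t (seg β l)) atTop (𝓝 x))
    (hβ : β ∉ ⋂ n, O n) : osc (alternating g O) β = 0 := by
  have hphase : EventuallyConst (fun l => phase g O (seg β l)) atTop :=
    not_imp_comm.1 mem_iInter_of_not_eventuallyConst_phase hβ
  obtain ⟨⟨n, t⟩, hnt⟩ := eventuallyConst_iff_exists_eventuallyEq.1 hphase
  obtain ⟨x, hx⟩ := hg t
  exact osc_eq_zero_of_tendsto (tendsto_alternating hnt hx)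

end alternating

/-- main lemma: for every Gδ set `G ⊆ 2^ω` of λ-measure zero
there is a martingale `f` with `G = D(f)` and `osc(f,β) ∈ {0} ∪ [1/2,1]` for
every `β`. -/
theorem gdelta_null_divergence_with_large_osc
    (μ : Measure (ℕ → Bool))
    (hμ : ∀ s : List Bool, μ (cyl s) = (1/2 : ℝ≥0∞) ^ s.length)
    (G : Set (ℕ → Bool)) (hG : IsGδ G) (hG0 : μ G = 0) :
    ∃ f : List Bool → ℝ, IsMartingale f ∧ G = divSet f ∧
      ∀ β : ℕ → Bool, osc f β ∈ ({0} : Set ℝ) ∪ Set.Icc (1/2 : ℝ) 1 := by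
  obtain ⟨O, hO, rfl⟩ := isGδ_iff_eq_iInter_nat.1 hG
  choose g hg using exists_isClimber hμ hG0
  have hmem {β} (hβ : β ∈ ⋂ n, O n) := osc_alternating_mem_Icc_of_mem hg hO hβ
  have hnotMem {β} (hβ : β ∉ ⋂ n, O n) :=
    osc_alternating_eq_zero_of_notMem (fun t => (hg t).exists_tendsto β) hβ
  refine ⟨alternating g O, isMartingale_alternating hg, ?_, fun β => ?_⟩
  · ext β
    refine ⟨fun hβ => one_half_pos.trans_le (hmem hβ).1, fun hpos => ?_⟩
    exact by_contra fun hβ => hpos.ne' (hnotMem hβ)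
  · by_cases hβ : β ∈ ⋂ n, O n
    · exact .inr (hmem hβ)
    · exact .inl (hnotMem hβ)
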